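/- An algebraic curvature operator R on ℝ⁴ is both NNIC₊ and NNIC₋ if and only if R has nonnegative isotropic curvature, i.e. ⟨Rω,ω⟩_h ≥ 0 for every ω ∈ Λ²ℂ⁴ of the form ω = v∧w with v,w ∈ ℂ⁴ spanning an isotropic 2-plane. -/

import Mathlib

noncomputable section

open scoped ComplexConjugate

/-- `ℝ⁴` with its standard basis. -/
abbrev V4 := Fin 4 → ℝ
/-- `Λ²ℝ⁴` in the coordinates given by the basis
`e₁∧e₂, e₁∧e₃, e₁∧e₄, e₂∧e₃, e₂∧e₄, e₃∧e₄` (0-indexed). -/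
abbrev L6 := Fin 6 → ℝ
/-- Endomorphisms of `Λ²ℝ⁴`, as `6×6` matrices. -/
abbrev M6 := Fin 6 → Fin 6 → ℝ

/-- standard basis of ℝ⁴ -/
def std4 (i : Fin 4) : V4 := fun j => if j = i then 1 else 0

/-- the standard inner product of ℝ⁴ -/
def ip4 (x y : V4) : ℝ := ∑ i, x i * y i

/-- the index pairs for the basis of Λ²ℝ⁴ -/
def pr : Fin 6 → Fin 4 × Fin 4 := ![(0,1),(0,2),(0,3),(1,2),(1,3),(2,3)]

/-- the wedge product `x ∧ y` of two vectors, in coordinates.  With this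
coordinate expression, the standard inner product `ip6` below satisfies
`⟨x∧y, z∧t⟩ = ⟨x,z⟩⟨y,t⟩ − ⟨x,t⟩⟨y,z⟩`. -/
def wedge (x y : V4) : L6 := fun k => x (pr k).1 * y (pr k).2 - x (pr k).2 * y (pr k).1

/-- the inner product of Λ²ℝ⁴ -/
def ip6 (a b : L6) : ℝ := ∑ k, a k * b k

/-- The Hodge star operator on Λ²ℝ⁴. -/
def hodge (w : L6) : L6 := ![w 5, -(w 4), w 3, w 2, -(w 1), w 0]

/-- self-dual 2-forms (the +1 eigenspace Λ²₊ of the Hodge star) -/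
def SelfDual (w : L6) : Prop := hodge w = w
/-- anti-self-dual 2-forms (the −1 eigenspace Λ²₋ of the Hodge star) -/
def AntiSelfDual (w : L6) : Prop := hodge w = -w

/-- application of an endomorphism (matrix) of Λ²ℝ⁴ to a 2-form -/
def appM (A : M6) (w : L6) : L6 := fun k => ∑ l, A k l * w l

/-- symmetry of an endomorphism of Λ²ℝ⁴ w.r.t. the inner product -/
def IsSymm6 (A : M6) : Prop := ∀ a b : L6, ip6 (appM A a) b = ip6 a (appM A b)

/-- the first Bianchi identity -/
def Bianchi (A : M6) : Prop := ∀ x y z t : V4,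
  ip6 (appM A (wedge x y)) (wedge z t) + ip6 (appM A (wedge z x)) (wedge y t)
    + ip6 (appM A (wedge y z)) (wedge x t) = 0

/-- algebraic curvature operators on ℝ⁴ : symmetric endomorphisms of Λ²ℝ⁴
satisfying the first Bianchi identity.  The set of these is `S²_BΛ²ℝ⁴`. -/
def IsCurvOp (A : M6) : Prop := IsSymm6 A ∧ Bianchi A

/-- the scalar curvature: twice the trace -/
def scal (A : M6) : ℝ := 2 * ∑ k, A k k

/-- orthogonal projection P₊ of Λ²ℝ⁴ onto Λ²₊ -/
def pplus (w : L6) : L6 := (1/2 : ℝ) • (w + hodge w)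

/-- the self-dual Weyl part W₊ of a curvature operator, as a map on Λ²₊:
`W₊η = P₊(Rη) − (scal(R)/12)·η`. -/
def Wplus (A : M6) (η : L6) : L6 := pplus (appM A η) - (scal A / 12) • η

/-- `R` is PIC₊ : the quadratic form `η ↦ ⟨Rη,η⟩` on Λ²₊ is 2-positive. -/
def PICp (A : M6) : Prop := ∀ η ζ : L6, SelfDual η → SelfDual ζ →
  ip6 η η = 1 → ip6 ζ ζ = 1 → ip6 η ζ = 0 →
  0 < ip6 (appM A η) η + ip6 (appM A ζ) ζ

/-- `R` is NNIC₊ : the quadratic form `η ↦ ⟨Rη,η⟩` on Λ²₊ is 2-nonnegative. -/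
def NNICp (A : M6) : Prop := ∀ η ζ : L6, SelfDual η → SelfDual ζ →
  ip6 η η = 1 → ip6 ζ ζ = 1 → ip6 η ζ = 0 →
  0 ≤ ip6 (appM A η) η + ip6 (appM A ζ) ζ

/-- `R` is PIC₋ : the quadratic form `η ↦ ⟨Rη,η⟩` on Λ²₋ is 2-positive. -/
def PICm (A : M6) : Prop := ∀ η ζ : L6, AntiSelfDual η → AntiSelfDual ζ →
  ip6 η η = 1 → ip6 ζ ζ = 1 → ip6 η ζ = 0 →
  0 < ip6 (appM A η) η + ip6 (appM A ζ) ζ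

/-- `R` is NNIC₋ : the quadratic form `η ↦ ⟨Rη,η⟩` on Λ²₋ is 2-nonnegative. -/
def NNICm (A : M6) : Prop := ∀ η ζ : L6, AntiSelfDual η → AntiSelfDual ζ →
  ip6 η η = 1 → ip6 ζ ζ = 1 → ip6 η ζ = 0 →
  0 ≤ ip6 (appM A η) η + ip6 (appM A ζ) ζ

/- ### complexifications -/

/-- `ℂ⁴` -/
abbrev VC4 := Fin 4 → ℂ
/-- `Λ²ℂ⁴` -/
abbrev LC6 := Fin 6 → ℂ

/-- the wedge product on ℂ⁴ -/
def wedgeC (x y : VC4) : LC6 := fun k => x (pr k).1 * y (pr k).2 - x (pr k).2 * y (pr k).1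

/-- the complex-bilinear extension of the inner product of ℝ⁴ -/
def bilC4 (x y : VC4) : ℂ := ∑ i, x i * y i

/-- the complex-bilinear extension of the inner product of Λ²ℝ⁴ -/
def bilC6 (a b : LC6) : ℂ := ∑ k, a k * b k

/-- the Hermitian inner product `⟨·,·⟩_h` on Λ²ℂ⁴ associated to the real inner
product on Λ²ℝ⁴ -/
def hermC6 (a b : LC6) : ℂ := ∑ k, a k * conj (b k)

/-- the complex-linear extension of an endomorphism of Λ²ℝ⁴ to Λ²ℂ⁴ -/
def appMC (A : M6) (w : LC6) : LC6 := fun k => ∑ l, (A k l : ℂ) * w l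

/-- the complex-linear extension of the Hodge star -/
def hodgeC (w : LC6) : LC6 := ![w 5, -(w 4), w 3, w 2, -(w 1), w 0]

/-- membership in `Λ²₊ ⊗ ℂ` -/
def SelfDualC (w : LC6) : Prop := hodgeC w = w

/-!
For `ω = η + iζ` the real part of `⟨Rω,ω⟩_h` is `⟨Rη,η⟩ + ⟨Rζ,ζ⟩`, and `ω` is null for the
bilinear form exactly when `η ⊥ ζ` and `|η| = |ζ|`. So NNIC₊ and NNIC₋ say that `R` is
nonnegative on the null forms `ω` with `⋆ω = ω` and `⋆ω = -ω` respectively. It remains to see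
that these forms are, up to scale, the `v ∧ w` with `v, w` spanning an isotropic plane. Viewing
`ω` as a skew matrix `Ω`, both families are the solutions of `Ω² = 0`: for such `ω`, the rows of
`Ω` are pairwise orthogonal null vectors, and any two of them wedge to a multiple of `ω`.
-/

section TwoNonnegative

variable {A : M6} {E : Submodule ℝ L6}

lemma ip6_smul_smul (c : ℝ) (a b : L6) : ip6 (c • a) (c • b) = c ^ 2 * ip6 a b := by
  change (c • a) ⬝ᵥ (c • b) = c ^ 2 * a ⬝ᵥ b
  rw [smul_dotProduct, dotProduct_smul, smul_smul, smul_eq_mul, sq]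

lemma appM_smul (A : M6) (c : ℝ) (a : L6) : appM A (c • a) = c • appM A a :=
  Matrix.mulVec_smul (Matrix.of A) c a

/-- 2-nonnegativity of the quadratic form `η ↦ ⟨Rη,η⟩` on a subspace `E` of `Λ²ℝ⁴`; for `E = Λ²₊`
and `E = Λ²₋` this is NNIC₊ and NNIC₋. -/
def IsTwoNonnegOn (A : M6) (E : Submodule ℝ L6) : Prop :=
  ∀ η ∈ E, ∀ ζ ∈ E, ip6 η η = 1 → ip6 ζ ζ = 1 → ip6 η ζ = 0 →
    0 ≤ ip6 (appM A η) η + ip6 (appM A ζ) ζ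

lemma IsTwoNonnegOn.nonneg_of_ip6_eq (h : IsTwoNonnegOn A E) {η ζ : L6} (hη : η ∈ E) (hζ : ζ ∈ E)
    (hnorm : ip6 η η = ip6 ζ ζ) (horth : ip6 η ζ = 0) :
    0 ≤ ip6 (appM A η) η + ip6 (appM A ζ) ζ := by
  rcases eq_or_ne (ip6 η η) 0 with h0 | h0
  · have hη0 : η = 0 := dotProduct_self_eq_zero.1 h0
    have hζ0 : ζ = 0 := dotProduct_self_eq_zero.1 (hnorm.symm.trans h0)
    simp [hη0, hζ0, ip6]
  · have hpos : 0 < ip6 η η := (Finset.sum_nonneg fun k _ => mul_self_nonneg (η k)).lt_of_ne' h0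
    set c := (√(ip6 η η))⁻¹
    have hc : c ^ 2 = (ip6 η η)⁻¹ := by rw [inv_pow, Real.sq_sqrt hpos.le]
    have hscaled := h (c • η) (E.smul_mem c hη) (c • ζ) (E.smul_mem c hζ)
      (by rw [ip6_smul_smul, hc, inv_mul_cancel₀ h0])
      (by rw [ip6_smul_smul, hc, ← hnorm, inv_mul_cancel₀ h0])
      (by rw [ip6_smul_smul, horth, mul_zero])
    simp only [appM_smul, ip6_smul_smul, hc, ← mul_add] at hscaled
    exact nonneg_of_mul_nonneg_right hscaled (inv_pos.2 hpos)

end TwoNonnegative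

section Complexification

variable (A : M6) (ω : LC6)

lemma re_appMC : Complex.re ∘ appMC A ω = appM A (Complex.re ∘ ω) := by
  ext k; simp [appMC, appM]

lemma im_appMC : Complex.im ∘ appMC A ω = appM A (Complex.im ∘ ω) := by
  ext k; simp [appMC, appM]

lemma re_hermC6 (a b : LC6) : (hermC6 a b).re =
    ip6 (Complex.re ∘ a) (Complex.re ∘ b) + ip6 (Complex.im ∘ a) (Complex.im ∘ b) := by
  simp [hermC6, ip6, Finset.sum_add_distrib]

lemma im_hermC6 (a b : LC6) : (hermC6 a b).im =
    ip6 (Complex.im ∘ a) (Complex.re ∘ b) - ip6 (Complex.re ∘ a) (Complex.im ∘ b) := by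
  simp [hermC6, ip6, Finset.sum_add_distrib]
  ring

lemma re_hermC6_appMC_self : (hermC6 (appMC A ω) ω).re =
    ip6 (appM A (Complex.re ∘ ω)) (Complex.re ∘ ω) +
      ip6 (appM A (Complex.im ∘ ω)) (Complex.im ∘ ω) := by
  rw [re_hermC6, re_appMC, im_appMC]

open scoped ComplexOrder in
lemma hermC6_appMC_self_nonneg_iff {A : M6} (hA : IsSymm6 A) :
    0 ≤ hermC6 (appMC A ω) ω ↔ 0 ≤ (hermC6 (appMC A ω) ω).re := by
  have him : (hermC6 (appMC A ω) ω).im = 0 := by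
    rw [im_hermC6, re_appMC, im_appMC, hA, sub_eq_zero]
    exact dotProduct_comm _ _
  simp [Complex.nonneg_iff, him]

lemma hermC6_appMC_smul_self (c : ℂ) :
    hermC6 (appMC A (c • ω)) (c • ω) = c * conj c * hermC6 (appMC A ω) ω := by
  change (Matrix.of (fun k l => (A k l : ℂ))).mulVec (c • ω) ⬝ᵥ star (c • ω) =
    c * star c * (Matrix.of (fun k l => (A k l : ℂ))).mulVec ω ⬝ᵥ star ω
  rw [Matrix.mulVec_smul, star_smul, smul_dotProduct, dotProduct_smul, smul_smul, smul_eq_mul]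

lemma bilC6_self_eq_zero_iff : bilC6 ω ω = 0 ↔
    ip6 (Complex.re ∘ ω) (Complex.re ∘ ω) = ip6 (Complex.im ∘ ω) (Complex.im ∘ ω) ∧
      ip6 (Complex.re ∘ ω) (Complex.im ∘ ω) = 0 := by
  have hre : (bilC6 ω ω).re =
      ip6 (Complex.re ∘ ω) (Complex.re ∘ ω) - ip6 (Complex.im ∘ ω) (Complex.im ∘ ω) := by
    simp [bilC6, ip6]
  have him : (bilC6 ω ω).im = 2 * ip6 (Complex.re ∘ ω) (Complex.im ∘ ω) := by
    simp only [bilC6, ip6, Complex.im_sum, Complex.mul_im, Finset.mul_sum, Function.comp_apply]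
    exact Finset.sum_congr rfl fun k _ => by ring
  rw [Complex.ext_iff, hre, him]
  simp [sub_eq_zero]

lemma isTwoNonnegOn_iff_forall_null {A : M6} {E : Submodule ℝ L6} : IsTwoNonnegOn A E ↔
    ∀ ω : LC6, Complex.re ∘ ω ∈ E → Complex.im ∘ ω ∈ E → bilC6 ω ω = 0 →
      0 ≤ (hermC6 (appMC A ω) ω).re := by
  simp only [re_hermC6_appMC_self, bilC6_self_eq_zero_iff]
  constructor
  · rintro h ω hre him ⟨hnorm, horth⟩
    exact h.nonneg_of_ip6_eq hre him hnorm horth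
  · intro h η hη ζ hζ hη1 hζ1 horth
    exact h (fun k => ⟨η k, ζ k⟩) hη hζ ⟨hη1.trans hζ1.symm, horth⟩

end Complexification

section HodgeStar

variable (A : M6) (ω : LC6)

/-- `hodge` as a linear map, so that `Λ²₊` and `Λ²₋` are its eigenspaces in Mathlib's sense. -/
def hodgeLinear : L6 →ₗ[ℝ] L6 where
  toFun := hodge
  map_add' a b := by ext k; fin_cases k <;> simp [hodge, add_comm]
  map_smul' c a := by ext k; fin_cases k <;> simp [hodge]

lemma hodge_re : hodge (Complex.re ∘ ω) = Complex.re ∘ hodgeC ω := by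
  ext k; fin_cases k <;> simp [hodge, hodgeC]

lemma hodge_im : hodge (Complex.im ∘ ω) = Complex.im ∘ hodgeC ω := by
  ext k; fin_cases k <;> simp [hodge, hodgeC]

lemma hodgeC_eq_smul_iff (s : ℝ) : hodgeC ω = s • ω ↔
    Complex.re ∘ ω ∈ Module.End.eigenspace hodgeLinear s ∧
      Complex.im ∘ ω ∈ Module.End.eigenspace hodgeLinear s := by
  simp only [Module.End.mem_eigenspace_iff, hodgeLinear, LinearMap.coe_mk, AddHom.coe_mk,
    hodge_re, hodge_im]
  simp [funext_iff, Complex.ext_iff, forall_and]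

lemma isTwoNonnegOn_eigenspace_iff (s : ℝ) :
    IsTwoNonnegOn A (Module.End.eigenspace hodgeLinear s) ↔
      ∀ ω : LC6, hodgeC ω = s • ω → bilC6 ω ω = 0 → 0 ≤ (hermC6 (appMC A ω) ω).re := by
  simp only [isTwoNonnegOn_iff_forall_null, hodgeC_eq_smul_iff, and_imp]

lemma nnicp_iff_forall_null : NNICp A ↔
    ∀ ω : LC6, hodgeC ω = ω → bilC6 ω ω = 0 → 0 ≤ (hermC6 (appMC A ω) ω).re := by
  have h : NNICp A ↔ IsTwoNonnegOn A (Module.End.eigenspace hodgeLinear 1) := by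
    simp only [NNICp, IsTwoNonnegOn, Module.End.mem_eigenspace_iff, one_smul]
    exact forall_congr' fun η => forall_comm
  simpa only [one_smul] using h.trans (isTwoNonnegOn_eigenspace_iff A 1)

lemma nnicm_iff_forall_null : NNICm A ↔
    ∀ ω : LC6, hodgeC ω = -ω → bilC6 ω ω = 0 → 0 ≤ (hermC6 (appMC A ω) ω).re := by
  have h : NNICm A ↔ IsTwoNonnegOn A (Module.End.eigenspace hodgeLinear (-1)) := by
    simp only [NNICm, IsTwoNonnegOn, Module.End.mem_eigenspace_iff, neg_one_smul]
    exact forall_congr' fun η => forall_comm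
  simpa only [neg_one_smul] using h.trans (isTwoNonnegOn_eigenspace_iff A (-1))

end HodgeStar

section SkewMatrix

open Matrix

variable {ω : LC6}

/-- The skew-symmetric matrix of `ω ∈ Λ²ℂ⁴`, normalised so that `v ∧ w` goes to `vwᵀ - wvᵀ`. -/
def skewMatrix : LC6 →ₗ[ℂ] Matrix (Fin 4) (Fin 4) ℂ where
  toFun ω := !![0, ω 0, ω 1, ω 2;
    -ω 0, 0, ω 3, ω 4;
    -ω 1, -ω 3, 0, ω 5;
    -ω 2, -ω 4, -ω 5, 0]
  map_add' a b := by ext i j; fin_cases i <;> fin_cases j <;> simp [add_comm]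
  map_smul' c a := by ext i j; fin_cases i <;> fin_cases j <;> simp

lemma skewMatrix_apply (ω : LC6) : skewMatrix ω =
    !![0, ω 0, ω 1, ω 2; -ω 0, 0, ω 3, ω 4; -ω 1, -ω 3, 0, ω 5; -ω 2, -ω 4, -ω 5, 0] := rfl

lemma transpose_skewMatrix (ω : LC6) : (skewMatrix ω)ᵀ = -skewMatrix ω := by
  ext i j; fin_cases i <;> fin_cases j <;> simp [skewMatrix_apply]

lemma skewMatrix_wedgeC (v w : VC4) :
    skewMatrix (wedgeC v w) = vecMulVec v w - vecMulVec w v := by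
  ext i j
  fin_cases i <;> fin_cases j <;> simp [skewMatrix_apply, wedgeC, pr, vecMulVec_apply] <;> ring

lemma skewMatrix_wedgeC_mul_self {v w : VC4} (hv : bilC4 v v = 0) (hw : bilC4 w w = 0)
    (hvw : bilC4 v w = 0) : skewMatrix (wedgeC v w) * skewMatrix (wedgeC v w) = 0 := by
  have hv' : v ⬝ᵥ v = 0 := hv
  have hw' : w ⬝ᵥ w = 0 := hw
  have hvw' : v ⬝ᵥ w = 0 := hvw
  simp [skewMatrix_wedgeC, sub_mul, mul_sub, vecMulVec_mul_vecMulVec, hv', hw', hvw',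
    dotProduct_comm w v]

lemma bilC4_skewMatrix_eq_zero (hω : skewMatrix ω * skewMatrix ω = 0) (i j : Fin 4) :
    bilC4 (skewMatrix ω i) (skewMatrix ω j) = 0 := by
  have h : skewMatrix ω * (skewMatrix ω)ᵀ = 0 := by rw [transpose_skewMatrix, mul_neg, hω, neg_zero]
  exact congr_fun₂ h i j

-- `⟨ω, ⋆ω⟩ = 0` is the Plücker relation: twice the Pfaffian of `ω` vanishes.
lemma wedgeC_skewMatrix (hω : bilC6 ω (hodgeC ω) = 0) (k : Fin 6) :
    wedgeC (skewMatrix ω (pr k).1) (skewMatrix ω (pr k).2) = ω k • ω := by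
  have hPf : ω 0 * ω 5 - ω 1 * ω 4 + ω 2 * ω 3 = 0 := by
    have h : bilC6 ω (hodgeC ω) = 2 * (ω 0 * ω 5 - ω 1 * ω 4 + ω 2 * ω 3) := by
      simp [bilC6, hodgeC, Fin.sum_univ_six]
      ring
    simpa [h] using hω
  ext l
  fin_cases k <;> fin_cases l <;> simp [wedgeC, pr, skewMatrix_apply] <;> grind

lemma trace_skewMatrix_mul_self (ω : LC6) :
    (skewMatrix ω * skewMatrix ω).trace = -2 * bilC6 ω ω := by
  simp [skewMatrix_apply, trace, Fin.sum_univ_four, Fin.sum_univ_six, bilC6]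
  ring

lemma hodgeC_hodgeC (ω : LC6) : hodgeC (hodgeC ω) = ω := by
  ext k; fin_cases k <;> simp [hodgeC]

lemma hodgeC_add (a b : LC6) : hodgeC (a + b) = hodgeC a + hodgeC b := by
  ext k; fin_cases k <;> simp [hodgeC, add_comm]

lemma hodgeC_sub (a b : LC6) : hodgeC (a - b) = hodgeC a - hodgeC b := by
  ext k; fin_cases k <;> simp [hodgeC] <;> ring

lemma skewMatrix_hodgeC (ω : LC6) : skewMatrix (hodgeC ω) =
    !![0, ω 5, -ω 4, ω 3; -ω 5, 0, ω 2, -ω 1; ω 4, -ω 2, 0, ω 0; -ω 3, ω 1, -ω 0, 0] := by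
  simp [skewMatrix_apply, hodgeC]

lemma skewMatrix_mul_skewMatrix_hodgeC (ω : LC6) :
    skewMatrix ω * skewMatrix (hodgeC ω) =
      (-(bilC6 ω (hodgeC ω) / 2)) • (1 : Matrix (Fin 4) (Fin 4) ℂ) := by
  rw [skewMatrix_hodgeC, skewMatrix_apply, bilC6, Fin.sum_univ_six]
  ext i j
  fin_cases i <;> fin_cases j <;> simp [hodgeC] <;> ring

lemma skewMatrix_hodgeC_mul_self (ω : LC6) :
    skewMatrix (hodgeC ω) * skewMatrix (hodgeC ω) =
      -(skewMatrix ω * skewMatrix ω) - bilC6 ω ω • (1 : Matrix (Fin 4) (Fin 4) ℂ) := by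
  rw [skewMatrix_hodgeC, skewMatrix_apply, bilC6, Fin.sum_univ_six]
  ext i j
  rw [Matrix.sub_apply, Matrix.neg_apply, Matrix.smul_apply, mul_apply, mul_apply,
    Fin.sum_univ_four, Fin.sum_univ_four]
  fin_cases i <;> fin_cases j <;> simp <;> ring

lemma hodgeC_eq_self_iff : hodgeC ω = ω ↔ ω 3 = ω 2 ∧ ω 4 = -ω 1 ∧ ω 5 = ω 0 := by
  constructor
  · intro h
    exact ⟨congr_fun h 2, neg_eq_iff_eq_neg.1 (congr_fun h 1), congr_fun h 0⟩
  · rintro ⟨h3, h4, h5⟩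
    ext k; fin_cases k <;> simp [hodgeC, h3, h4, h5]

lemma hodgeC_eq_neg_iff : hodgeC ω = -ω ↔ ω 3 = -ω 2 ∧ ω 4 = ω 1 ∧ ω 5 = -ω 0 := by
  constructor
  · intro h
    exact ⟨congr_fun h 2, neg_injective (congr_fun h 1), congr_fun h 0⟩
  · rintro ⟨h3, h4, h5⟩
    ext k; fin_cases k <;> simp [hodgeC, h3, h4, h5]

-- The nine products `αₖβₗ` are linear combinations of the entries of the product matrix.
lemma eq_zero_or_eq_zero_of_skewMatrix_mul_eq_zero {α β : LC6} (hα : hodgeC α = α)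
    (hβ : hodgeC β = -β) (h : skewMatrix α * skewMatrix β = 0) : α = 0 ∨ β = 0 := by
  obtain ⟨hα3, hα4, hα5⟩ := hodgeC_eq_self_iff.1 hα
  obtain ⟨hβ3, hβ4, hβ5⟩ := hodgeC_eq_neg_iff.1 hβ
  have hentry := congr_fun₂ h
  simp only [mul_apply, Fin.sum_univ_four, Fin.forall_fin_succ, skewMatrix_apply, hα3, hα4, hα5,
    hβ3, hβ4, hβ5, of_apply, cons_val, Fin.succ_zero_eq_one, Fin.succ_one_eq_two, Fin.reduceSucc,
    Matrix.zero_apply, IsEmpty.forall_iff, and_true, mul_zero, zero_mul, add_zero, zero_add,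
    mul_neg, neg_mul, neg_neg] at hentry
  have hprod : vecMulVec α β = 0 := by
    ext k l
    rw [vecMulVec_apply, Matrix.zero_apply]
    fin_cases k <;> fin_cases l <;> dsimp only <;> grind
  exact vecMulVec_eq_zero.1 hprod

lemma skewMatrix_mul_self_eq_zero_iff : skewMatrix ω * skewMatrix ω = 0 ↔
    (hodgeC ω = ω ∨ hodgeC ω = -ω) ∧ bilC6 ω ω = 0 := by
  have hdual := skewMatrix_hodgeC_mul_self ω
  constructor
  · intro hω
    have hnull : bilC6 ω ω = 0 := by simpa [hω] using (trace_skewMatrix_mul_self ω).symm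
    rw [hω, hnull, zero_smul, sub_zero, neg_zero] at hdual
    have hcomm : skewMatrix (hodgeC ω) * skewMatrix ω = skewMatrix ω * skewMatrix (hodgeC ω) := by
      have h := skewMatrix_mul_skewMatrix_hodgeC (hodgeC ω)
      rw [hodgeC_hodgeC] at h
      rw [h, skewMatrix_mul_skewMatrix_hodgeC]
      exact congr_arg (fun t => -(t / 2) • 1) (dotProduct_comm _ _)
    have hprod : skewMatrix (ω + hodgeC ω) * skewMatrix (ω - hodgeC ω) = 0 := by
      rw [map_add, map_sub, add_mul, mul_sub, mul_sub, hω, hdual, hcomm]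
      abel
    have hsplit := eq_zero_or_eq_zero_of_skewMatrix_mul_eq_zero
      (by rw [hodgeC_add, hodgeC_hodgeC, add_comm]) (by rw [hodgeC_sub, hodgeC_hodgeC, neg_sub])
      hprod
    exact ⟨hsplit.symm.imp (fun h => (sub_eq_zero.1 h).symm) eq_neg_of_add_eq_zero_right, hnull⟩
  · rintro ⟨hstar, hnull⟩
    have hsq : skewMatrix (hodgeC ω) * skewMatrix (hodgeC ω) = skewMatrix ω * skewMatrix ω := by
      rcases hstar with h | h <;> simp [h]
    rw [hsq, hnull, zero_smul, sub_zero] at hdual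
    ext i j
    exact self_eq_neg.1 (congr_fun₂ hdual i j)

lemma bilC6_hodgeC_eq_zero (hω : skewMatrix ω * skewMatrix ω = 0) : bilC6 ω (hodgeC ω) = 0 := by
  obtain ⟨hstar | hstar, hnull⟩ := skewMatrix_mul_self_eq_zero_iff.1 hω
  · rw [hstar, hnull]
  · rw [hstar, ← neg_eq_zero.2 hnull]
    exact dotProduct_neg ω ω

end SkewMatrix

open scoped ComplexOrder in
lemma nonneg_isotropic_iff_forall_skewMatrix_mul_self_eq_zero (A : M6) :
    (∀ v w : VC4, bilC4 v v = 0 → bilC4 w w = 0 → bilC4 v w = 0 → wedgeC v w ≠ 0 →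
      0 ≤ hermC6 (appMC A (wedgeC v w)) (wedgeC v w)) ↔
    ∀ ω : LC6, skewMatrix ω * skewMatrix ω = 0 → 0 ≤ hermC6 (appMC A ω) ω := by
  constructor
  · intro h ω hω
    rcases eq_or_ne ω 0 with rfl | hne
    · simp [hermC6]
    obtain ⟨k, hk⟩ := Function.ne_iff.1 hne
    have hrows := h _ _ (bilC4_skewMatrix_eq_zero hω _ _) (bilC4_skewMatrix_eq_zero hω _ _)
      (bilC4_skewMatrix_eq_zero hω (pr k).1 (pr k).2)
    rw [wedgeC_skewMatrix (bilC6_hodgeC_eq_zero hω) k, hermC6_appMC_smul_self] at hrows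
    have hpos : 0 < ω k * conj (ω k) := by
      rw [Complex.mul_conj]
      exact_mod_cast Complex.normSq_pos.2 hk
    exact le_of_mul_le_mul_left (by simpa only [mul_zero] using hrows (smul_ne_zero hk hne)) hpos
  · intro h v w hv hw hvw _
    exact h _ (skewMatrix_wedgeC_mul_self hv hw hvw)

open scoped ComplexOrder in
theorem nnicPlus_and_nnicMinus_iff_nonneg_isotropic_general (A : M6) (hA : IsSymm6 A) :
    (NNICp A ∧ NNICm A) ↔
    (∀ v w : VC4, bilC4 v v = 0 → bilC4 w w = 0 → bilC4 v w = 0 →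
      wedgeC v w ≠ 0 →
      0 ≤ hermC6 (appMC A (wedgeC v w)) (wedgeC v w)) := by
  rw [nonneg_isotropic_iff_forall_skewMatrix_mul_self_eq_zero]
  simp only [skewMatrix_mul_self_eq_zero_iff, hermC6_appMC_self_nonneg_iff _ hA,
    nnicp_iff_forall_null, nnicm_iff_forall_null, or_imp, and_imp, forall_and]

open scoped ComplexOrder in
/-- an algebraic curvature operator is both NNIC₊ and NNIC₋ iff
it has nonnegative isotropic curvature. -/
theorem nnicPlus_and_nnicMinus_iff_nonneg_isotropic (A : M6) (hA : IsCurvOp A) :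
    (NNICp A ∧ NNICm A) ↔
    (∀ v w : VC4, bilC4 v v = 0 → bilC4 w w = 0 → bilC4 v w = 0 →
      wedgeC v w ≠ 0 →
      0 ≤ hermC6 (appMC A (wedgeC v w)) (wedgeC v w)) := by
  exact nnicPlus_and_nnicMinus_iff_nonneg_isotropic_general A hA.1
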